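/- For a prime p ≥ 3, the number of conjugacy classes of SL₂(F_p) is p + 4, broken down as: (p−3)/2 split semisimple classes, (p−1)/2 nonsplit semisimple classes, 2 central classes, and 4 classes of non-semisimple elements. -/

import Mathlib

open Matrix

/-- `A` is split semisimple: conjugate to a diagonal matrix with eigenvalue `μ ≠ ±1`. -/
def IsSplitSemisimple (p : ℕ) [Fact p.Prime]
    (A : Matrix.SpecialLinearGroup (Fin 2) (ZMod p)) : Prop :=
  ∃ (B : Matrix.SpecialLinearGroup (Fin 2) (ZMod p)) (μ : (ZMod p)ˣ),
    IsConj A B ∧ μ ^ 2 ≠ 1 ∧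
    (B : Matrix (Fin 2) (Fin 2) (ZMod p))
      = !![(μ : ZMod p), 0; 0, ((μ⁻¹ : (ZMod p)ˣ) : ZMod p)]

/-- `A` is nonsplit semisimple: its characteristic polynomial is irreducible over `F_p`,
equivalently `tr(A)² - 4` is a non-square. -/
def IsNonsplitSemisimple (p : ℕ) [Fact p.Prime]
    (A : Matrix.SpecialLinearGroup (Fin 2) (ZMod p)) : Prop :=
  ¬ ∃ x : ZMod p, x ^ 2 = ((A : Matrix (Fin 2) (Fin 2) (ZMod p)).trace) ^ 2 - 4

/-- `A` is central: `A = ±1`. -/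
def IsCentralSL2 (p : ℕ) [Fact p.Prime]
    (A : Matrix.SpecialLinearGroup (Fin 2) (ZMod p)) : Prop :=
  A = 1 ∨ A = -1

/-- `A` is non-semisimple: conjugate to `[[±1, α], [0, ±1]]` with `α ≠ 0`. -/
def IsNonSemisimple (p : ℕ) [Fact p.Prime]
    (A : Matrix.SpecialLinearGroup (Fin 2) (ZMod p)) : Prop :=
  ∃ (B : Matrix.SpecialLinearGroup (Fin 2) (ZMod p)) (ε α : ZMod p),
    IsConj A B ∧ (ε = 1 ∨ ε = -1) ∧ α ≠ 0 ∧
    (B : Matrix (Fin 2) (Fin 2) (ZMod p)) = !![ε, α; 0, ε]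

abbrev SLp (p : ℕ) := Matrix.SpecialLinearGroup (Fin 2) (ZMod p)

lemma isConj_of_semi {p : ℕ} {A B : SLp p} (c : Matrix (Fin 2) (Fin 2) (ZMod p))
    (hc : c.det = 1) (h : A.1 * c = c * B.1) : IsConj A B := by
  obtain ⟨C, rfl⟩ : ∃ C : SLp p, C.1 = c := ⟨⟨c, hc⟩, rfl⟩
  have h' : C * B = A * C := Subtype.ext h.symm
  exact IsConj.symm (isConj_iff.2 ⟨C, mul_inv_eq_iff_eq_mul.2 h'⟩)

lemma semi_of_isConj {p : ℕ} {A B : SLp p} (h : IsConj A B) :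
    ∃ c : Matrix (Fin 2) (Fin 2) (ZMod p), c.det = 1 ∧ A.1 * c = c * B.1 := by
  obtain ⟨c, hc⟩ := isConj_iff.1 h.symm
  rw [mul_inv_eq_iff_eq_mul] at hc
  exact ⟨c.1, c.2, (congrArg Subtype.val hc).symm⟩

lemma trace_of_isConj {p : ℕ} {A B : SLp p} (h : IsConj A B) : A.1.trace = B.1.trace := by
  obtain ⟨c, hc⟩ := isConj_iff.1 h
  rw [← hc]
  simp only [Matrix.SpecialLinearGroup.coe_mul]
  change _ = (c.1 * A.1 * (c⁻¹).1).trace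
  rw [Matrix.trace_mul_comm, ← Matrix.mul_assoc]
  have : (c⁻¹).1 * c.1 = 1 := congrArg Subtype.val (inv_mul_cancel c)
  rw [this, one_mul]

def Nf {p : ℕ} (t : ZMod p) (d : (ZMod p)ˣ) : SLp p :=
  ⟨!![0, -((d⁻¹ : (ZMod p)ˣ) : ZMod p); (d : ZMod p), t], by simp [Matrix.det_fin_two]⟩

lemma Nf_trace {p : ℕ} (t : ZMod p) (d : (ZMod p)ˣ) : (Nf t d).1.trace = t := by
  simp [Nf, Matrix.trace_fin_two]

/-- cyclic vector -/
lemma conj_Nf_of_vec {p : ℕ} (A : SLp p) (x y : ZMod p) (d : (ZMod p)ˣ)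
    (h : x * (A.1 1 0 * x + A.1 1 1 * y) - y * (A.1 0 0 * x + A.1 0 1 * y) = d) :
    IsConj A (Nf A.1.trace d) := by
  have hd : (d : ZMod p) * ((d⁻¹ : (ZMod p)ˣ) : ZMod p) = 1 := by simp
  have hA := A.2
  rw [Matrix.det_fin_two] at hA
  set e := ((d⁻¹ : (ZMod p)ˣ) : ZMod p)
  refine isConj_of_semi !![x, e * (A.1 0 0 * x + A.1 0 1 * y);
    y, e * (A.1 1 0 * x + A.1 1 1 * y)] ?_ ?_
  · rw [Matrix.det_fin_two_of]
    linear_combination e * h + hd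
  · ext i j
    fin_cases i <;> fin_cases j <;>
      simp [Nf, Matrix.mul_apply, Fin.sum_univ_two, Matrix.trace_fin_two]
    · linear_combination -(A.1 0 0 * x + A.1 0 1 * y) * hd
    · change _ = -(x * e) + _
      linear_combination -(e * x) * hA
    · linear_combination -(A.1 1 0 * x + A.1 1 1 * y) * hd
    · change _ = -(y * e) + _
      linear_combination -(e * y) * hA

lemma conj_Nf {p : ℕ} [Fact p.Prime] (A : SLp p) (h1 : A ≠ 1) (h2 : A ≠ -1) :
    ∃ d, IsConj A (Nf A.1.trace d) := by
  have key : ∀ x y : ZMod p,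
      x * (A.1 1 0 * x + A.1 1 1 * y) - y * (A.1 0 0 * x + A.1 0 1 * y) ≠ 0 →
      ∃ d, IsConj A (Nf A.1.trace d) := fun x y h => ⟨Units.mk0 _ h, conj_Nf_of_vec A x y _ rfl⟩
  by_contra hcon
  have key' : ∀ x y : ZMod p,
      x * (A.1 1 0 * x + A.1 1 1 * y) - y * (A.1 0 0 * x + A.1 0 1 * y) = 0 := by
    intro x y
    by_contra h
    exact hcon (key x y h)
  have a10 : A.1 1 0 = 0 := by simpa using key' 1 0
  have a01 : A.1 0 1 = 0 := by simpa using key' 0 1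
  have a11 : A.1 1 1 = A.1 0 0 := by
    have := key' 1 1
    rw [a10, a01] at this
    linear_combination this
  have hA := A.2
  rw [Matrix.det_fin_two, a10, a01, a11] at hA
  have : (A.1 0 0 - 1) * (A.1 0 0 + 1) = 0 := by linear_combination hA
  rcases mul_eq_zero.1 this with h | h
  · apply h1
    ext i j
    fin_cases i <;> fin_cases j <;> simp [a10, a01, a11] <;> linear_combination h
  · apply h2
    ext i j
    fin_cases i <;> fin_cases j <;> simp [a10, a01, a11] <;> linear_combination h

lemma Nf_conj_Nf {p : ℕ} (t : ZMod p) (d e : (ZMod p)ˣ) (x y : ZMod p)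
    (h : x ^ 2 + t * x * y + y ^ 2 = d * e) : IsConj (Nf t d) (Nf t e) := by
  have hd : (d : ZMod p) * ((d⁻¹ : (ZMod p)ˣ) : ZMod p) = 1 := by simp
  have := conj_Nf_of_vec (Nf t d) (((d⁻¹ : (ZMod p)ˣ) : ZMod p) * x) y e (by
    simp only [Nf, Matrix.of_apply, Matrix.cons_val]
    set f := ((d⁻¹ : (ZMod p)ˣ) : ZMod p)
    linear_combination f * h + (e + f * x ^ 2) * hd)
  rwa [Nf_trace] at this

lemma two_ne {p : ℕ} [Fact p.Prime] (hp : 3 ≤ p) : (2 : ZMod p) ≠ 0 := by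
  intro h
  have : ((2 : ℕ) : ZMod p) = 0 := by exact_mod_cast h
  rw [ZMod.natCast_eq_zero_iff] at this
  have := Nat.le_of_dvd (by norm_num) this
  omega

lemma Nf_conj_one {p : ℕ} [Fact p.Prime] (hp : 3 ≤ p) (t : ZMod p) (ht : t ^ 2 - 4 ≠ 0)
    (d : (ZMod p)ˣ) : IsConj (Nf t d) (Nf t 1) := by
  have h2 := two_ne hp
  open Polynomial in
  obtain ⟨a, b, hab⟩ := FiniteField.exists_root_sum_quadratic (R := ZMod p)
    (f := X ^ 2) (g := C (4 - t ^ 2) * X ^ 2 + C 0 * X + C (-4 * (d : ZMod p)))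
    (by simp) (degree_quadratic (by intro h; apply ht; linear_combination -h))
    (by rw [ZMod.card]; exact ((Fact.out : p.Prime).eq_two_or_odd).resolve_left (by omega))
  simp at hab
  apply Nf_conj_Nf t d 1 ((a - t * b) / 2) b
  simp only [Units.val_one, mul_one]
  have h4 : (4 : ZMod p) ≠ 0 := by
    have : (4 : ZMod p) = 2 * 2 := by norm_num
    rw [this]; exact mul_ne_zero h2 h2
  apply mul_left_cancel₀ h4
  have : (a - t * b) / 2 * 2 = a - t * b := div_mul_cancel₀ _ h2
  generalize (a - t * b) / 2 = z at *
  have ha : a = z * 2 + t * b := by linear_combination -this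
  rw [ha] at hab
  linear_combination hab

lemma exists_nonsq {p : ℕ} [Fact p.Prime] (hp : 3 ≤ p) : ∃ s : (ZMod p)ˣ,
    ¬ IsSquare (s : ZMod p) ∧
      ∀ d : (ZMod p)ˣ, IsSquare (d : ZMod p) ∨ IsSquare ((d : ZMod p) * s) := by
  have hr : ringChar (ZMod p) ≠ 2 := by rw [ZMod.ringChar_zmod_n]; omega
  obtain ⟨a, ha⟩ := FiniteField.exists_nonsquare (F := ZMod p) hr
  have ha0 : a ≠ 0 := by rintro rfl; exact ha ⟨0, by simp⟩
  refine ⟨Units.mk0 a ha0, ha, fun d => ?_⟩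
  by_cases hd : IsSquare (d : ZMod p)
  · exact Or.inl hd
  · right
    rw [← quadraticChar_one_iff_isSquare (by simpa using ha0), map_mul,
      quadraticChar_neg_one_iff_not_isSquare.2 hd]
    rw [Units.val_mk0, quadraticChar_neg_one_iff_not_isSquare.2 ha]
    norm_num

lemma Nf_cases {p : ℕ} {s : (ZMod p)ˣ}
    (hs : ∀ d : (ZMod p)ˣ, IsSquare (d : ZMod p) ∨ IsSquare ((d : ZMod p) * s))
    (t : ZMod p) (d : (ZMod p)ˣ) : IsConj (Nf t d) (Nf t 1) ∨ IsConj (Nf t d) (Nf t s) := by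
  rcases hs d with ⟨r, h⟩ | ⟨r, h⟩
  · left
    apply Nf_conj_Nf t d 1 r 0
    simp [h]; ring
  · right
    apply Nf_conj_Nf t d s r 0
    simp [h]; ring

lemma Nf_not_conj {p : ℕ} {s : (ZMod p)ˣ} (hs : ¬ IsSquare (s : ZMod p)) (ε : ZMod p)
    (hε : ε ^ 2 = 1) : ¬ IsConj (Nf (2 * ε) 1) (Nf (2 * ε) s) := by
  intro h
  obtain ⟨c, hc, h⟩ := semi_of_isConj h
  have e1 := congrFun (congrFun h 0) 0
  have e2 := congrFun (congrFun h 1) 0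
  simp [Nf, Matrix.mul_apply, Fin.sum_univ_two] at e1 e2
  rw [Matrix.det_fin_two] at hc
  apply hs
  refine ⟨c 0 0 + ε * c 1 0, ?_⟩
  linear_combination -(s : ZMod p) * hc - c 0 0 * e2 + c 1 0 * e1 - c 1 0 ^ 2 * hε

lemma Nf_nonss {p : ℕ} [Fact p.Prime] (ε : ZMod p) (hε : ε = 1 ∨ ε = -1) (d : (ZMod p)ˣ) :
    IsNonSemisimple p (Nf (2 * ε) d) := by
  have h2 : ε ^ 2 = 1 := by rcases hε with rfl | rfl <;> ring
  have hd : (d : ZMod p) * ((d⁻¹ : (ZMod p)ˣ) : ZMod p) = 1 := by simp [-Units.val_inv_eq_inv_val]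
  refine ⟨⟨!![ε, -((d⁻¹ : (ZMod p)ˣ) : ZMod p); 0, ε], ?_⟩, ε, _, ?_, hε, ?_, rfl⟩
  · rw [Matrix.det_fin_two_of]; linear_combination h2
  · refine isConj_of_semi !![1, 0; -ε * d, 1] (by simp [-Units.val_inv_eq_inv_val, Matrix.det_fin_two_of]) ?_
    ext i j
    fin_cases i <;> fin_cases j <;>
      simp [-Units.val_inv_eq_inv_val, Nf, Matrix.mul_apply, Fin.sum_univ_two]
    · linear_combination ε * hd
    · linear_combination -d * h2
    · ring
  · simp [-Units.val_inv_eq_inv_val]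

lemma Nf_ne {p : ℕ} [Fact p.Prime] (t : ZMod p) (d : (ZMod p)ˣ) :
    Nf t d ≠ 1 ∧ Nf t d ≠ -1 := by
  constructor <;>
  · intro h
    have := congrFun (congrFun (congrArg Subtype.val h) 1) 0
    simp [-Units.val_inv_eq_inv_val, Nf] at this

lemma nonss_conj {p : ℕ} [Fact p.Prime] (A : SLp p) (h : IsNonSemisimple p A) :
    ∃ ε d, (ε = 1 ∨ ε = -1) ∧ IsConj A (Nf (2 * ε) d) := by
  obtain ⟨B, ε, α, hAB, hε, hα, hB⟩ := h
  obtain ⟨d, hd⟩ := conj_Nf B (by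
      rintro rfl
      have := congrFun (congrFun hB 0) 1
      simp [-Units.val_inv_eq_inv_val] at this; exact hα this.symm) (by
      rintro rfl
      have := congrFun (congrFun hB 0) 1
      simp [-Units.val_inv_eq_inv_val] at this; exact hα this.symm)
  refine ⟨ε, d, hε, ?_⟩
  have : B.1.trace = 2 * ε := by rw [hB]; simp [-Units.val_inv_eq_inv_val, Matrix.trace_fin_two]; ring
  rw [this] at hd
  exact hAB.trans hd

lemma split_conj {p : ℕ} [Fact p.Prime] (hp : 3 ≤ p) (A : SLp p) (h : IsSplitSemisimple p A) :
    ∃ μ : (ZMod p)ˣ, μ ^ 2 ≠ 1 ∧ IsConj A (Nf ((μ : ZMod p) + ((μ⁻¹ : (ZMod p)ˣ) : ZMod p)) 1) := by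
  obtain ⟨B, μ, hAB, hμ, hB⟩ := h
  have hd : (μ : ZMod p) * ((μ⁻¹ : (ZMod p)ˣ) : ZMod p) = 1 := by simp [-Units.val_inv_eq_inv_val]
  have hμ' : (μ : ZMod p) ^ 2 ≠ 1 := fun h => hμ (Units.ext (by simpa using h))
  refine ⟨μ, hμ, ?_⟩
  obtain ⟨d, hd⟩ := conj_Nf B (by
      rintro rfl
      have := congrFun (congrFun hB 0) 0
      simp [-Units.val_inv_eq_inv_val] at this; rw [← this] at hμ'; simp [-Units.val_inv_eq_inv_val] at hμ') (by
      rintro rfl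
      have := congrFun (congrFun hB 0) 0
      simp [-Units.val_inv_eq_inv_val] at this; rw [← this] at hμ'; simp [-Units.val_inv_eq_inv_val] at hμ')
  have : B.1.trace = (μ : ZMod p) + ((μ⁻¹ : (ZMod p)ˣ) : ZMod p) := by
    rw [hB]; simp [-Units.val_inv_eq_inv_val, Matrix.trace_fin_two]
  rw [this] at hd
  refine hAB.trans (hd.trans (Nf_conj_one hp _ ?_ d))
  intro h0
  have hd : (μ : ZMod p) * ((μ⁻¹ : (ZMod p)ˣ) : ZMod p) = 1 := by simp [-Units.val_inv_eq_inv_val]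
  generalize ((μ⁻¹ : (ZMod p)ˣ) : ZMod p) = e at *
  have : ((μ : ZMod p) - e) ^ 2 = 0 := by linear_combination h0 - 4 * hd
  have := pow_eq_zero_iff (two_ne_zero) |>.1 this
  apply hμ'
  linear_combination μ * this + hd

lemma Nf_split {p : ℕ} [Fact p.Prime] (hp : 3 ≤ p) (μ : (ZMod p)ˣ) (hμ : μ ^ 2 ≠ 1) :
    IsSplitSemisimple p (Nf ((μ : ZMod p) + ((μ⁻¹ : (ZMod p)ˣ) : ZMod p)) 1) := by
  have hB : IsSplitSemisimple p
    ⟨!![(μ : ZMod p), 0; 0, ((μ⁻¹ : (ZMod p)ˣ) : ZMod p)], by simp [-Units.val_inv_eq_inv_val, Matrix.det_fin_two_of]⟩ :=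
    ⟨_, μ, IsConj.refl _, hμ, rfl⟩
  obtain ⟨ν, -, hν2⟩ := split_conj hp _ hB
  have := trace_of_isConj hν2
  rw [Nf_trace] at this
  rw [← this] at hν2
  simp only [Matrix.trace_fin_two_of] at hν2
  exact ⟨_, μ, hν2.symm, hμ, rfl⟩

/-- traces of split elements -/
def splitTr (p : ℕ) : Set (ZMod p) :=
  {t | ∃ μ : (ZMod p)ˣ, μ ^ 2 ≠ 1 ∧ t = (μ : ZMod p) + ((μ⁻¹ : (ZMod p)ˣ) : ZMod p)}

def nonsplitTr (p : ℕ) : Set (ZMod p) := {t | ¬ ∃ x : ZMod p, x ^ 2 = t ^ 2 - 4}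

lemma two_ne_neg_two {p : ℕ} [Fact p.Prime] (hp : 3 ≤ p) : (2 : ZMod p) ≠ -2 := by
  intro h
  have h2 := two_ne hp
  have : (2 : ZMod p) * 2 = 0 := by linear_combination h
  simp [h2] at this

lemma one_ne_neg_one' {p : ℕ} [Fact p.Prime] (hp : 3 ≤ p) : (1 : ZMod p) ≠ -1 := by
  intro h
  have h2 := two_ne hp
  apply h2
  linear_combination h

lemma splitTr_iff {p : ℕ} [Fact p.Prime] (hp : 3 ≤ p) (t : ZMod p) :
    t ∈ splitTr p ↔ t ^ 2 - 4 ≠ 0 ∧ ∃ x : ZMod p, x ^ 2 = t ^ 2 - 4 := by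
  have h2 := two_ne hp
  constructor
  · rintro ⟨μ, hμ, rfl⟩
    have hμ' : (μ : ZMod p) ^ 2 ≠ 1 := fun h => hμ (Units.ext (by simpa using h))
    have hd : (μ : ZMod p) * ((μ⁻¹ : (ZMod p)ˣ) : ZMod p) = 1 := Units.mul_inv μ
    generalize ((μ⁻¹ : (ZMod p)ˣ) : ZMod p) = e at *
    refine ⟨fun h0 => ?_, (μ : ZMod p) - e, by linear_combination -4 * hd⟩
    have : ((μ : ZMod p) - e) ^ 2 = 0 := by linear_combination h0 - 4 * hd
    have := pow_eq_zero_iff (two_ne_zero) |>.1 this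
    apply hμ'
    linear_combination μ * this + hd
  · rintro ⟨h0, x, hx⟩
    have ht : t = (t / 2) * 2 := (div_mul_cancel₀ _ h2).symm
    have hx' : x = (x / 2) * 2 := (div_mul_cancel₀ _ h2).symm
    generalize t / 2 = a at *
    generalize x / 2 = b at *
    subst ht hx'
    have h4 : (4 : ZMod p) ≠ 0 := by
      have : (4 : ZMod p) = 2 * 2 := by norm_num
      rw [this]; exact mul_ne_zero h2 h2
    have hab : (a + b) * (a - b) = 1 := by
      apply mul_left_cancel₀ h4
      linear_combination -hx
    refine ⟨⟨a + b, a - b, hab, by rw [mul_comm, hab]⟩, fun h => ?_, ?_⟩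
    · have h1 := congrArg Units.val h
      simp only [Units.val_pow_eq_pow_val, Units.val_one] at h1
      have hb : (a + b) * (2 * b) = 0 := by linear_combination h1 - hab
      rcases mul_eq_zero.1 hb with h3 | h3
      · rw [h3] at hab; simp at hab
      · apply h0
        rw [← hx]
        linear_combination (2 * b) * h3
    · simp only [Units.inv_mk]
      ring

lemma splitTr_card {p : ℕ} [Fact p.Prime] (hp : 3 ≤ p) :
    2 * (splitTr p).ncard + 3 = p := by
  classical
  let f : (ZMod p)ˣ → ZMod p := fun μ => (μ : ZMod p) + ((μ⁻¹ : (ZMod p)ˣ) : ZMod p)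
  let M : Finset (ZMod p)ˣ := Finset.univ.filter fun μ => μ ^ 2 ≠ 1
  have hu : (1 : (ZMod p)ˣ) ≠ -1 := fun h => one_ne_neg_one' hp (by
    simpa using congrArg Units.val h)
  have hM : M.card + 2 = p - 1 := by
    have h1 := Finset.card_filter_add_card_filter_not (s := (Finset.univ : Finset (ZMod p)ˣ))
      (fun μ => μ ^ 2 = 1)
    have h2 : (Finset.univ.filter fun μ : (ZMod p)ˣ => μ ^ 2 = 1) = {1, -1} := by
      ext μ
      simp only [Finset.mem_filter, Finset.mem_univ, true_and, Finset.mem_insert,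
        Finset.mem_singleton]
      rw [← Units.val_inj, ← Units.val_inj, ← Units.val_inj]
      simp only [Units.val_pow_eq_pow_val, Units.val_one, Units.val_neg]
      rw [sq]; exact mul_self_eq_one_iff
    rw [h2, Finset.card_pair hu, Finset.card_univ, ZMod.card_units] at h1
    have : (Finset.univ.filter fun μ : (ZMod p)ˣ => ¬ μ ^ 2 = 1) = M := rfl
    rw [this] at h1
    omega
  have hS : splitTr p = ((M.image f : Finset (ZMod p)) : Set (ZMod p)) := by
    ext t
    simp only [splitTr, Set.mem_ofPred_eq, Finset.coe_image, Set.mem_image, Finset.mem_coe, M, f,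
      Finset.mem_filter, Finset.mem_univ, true_and]
    constructor
    · rintro ⟨μ, h, rfl⟩; exact ⟨μ, h, rfl⟩
    · rintro ⟨μ, h, rfl⟩; exact ⟨μ, h, rfl⟩
  have hc := Finset.card_eq_sum_card_image f M
  rw [Finset.sum_const_nat (m := 2)] at hc
  · rw [hS, Set.ncard_coe_finset]
    omega
  · intro t ht
    obtain ⟨μ, hμ, rfl⟩ := Finset.mem_image.1 ht
    have hμ1 : μ ^ 2 ≠ 1 := (Finset.mem_filter.1 hμ).2
    have hne : μ ≠ μ⁻¹ := by
      intro h
      apply hμ1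
      rw [sq]
      nth_rw 2 [h]
      simp
    rw [← Finset.card_pair hne]
    congr 1
    ext ν
    simp only [Finset.mem_filter, Finset.mem_insert, Finset.mem_singleton, M, Finset.mem_univ,
      true_and]
    constructor
    · rintro ⟨-, h⟩
      have e1 : (μ : ZMod p) * ((μ⁻¹ : (ZMod p)ˣ) : ZMod p) = 1 := Units.mul_inv μ
      have e2 : (ν : ZMod p) * ((ν⁻¹ : (ZMod p)ˣ) : ZMod p) = 1 := Units.mul_inv ν
      have : ((ν : ZMod p) - μ) * (ν - ((μ⁻¹ : (ZMod p)ˣ) : ZMod p)) = 0 := by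
        simp only [f] at h
        linear_combination ν * h + e1 - e2
      rcases mul_eq_zero.1 this with h | h
      · left; exact Units.ext (sub_eq_zero.1 h)
      · right; exact Units.ext (sub_eq_zero.1 h)
    · rintro (rfl | rfl)
      · exact ⟨hμ1, rfl⟩
      · refine ⟨by rw [inv_pow]; simpa using hμ1, ?_⟩
        simp only [f, inv_inv]
        ring

lemma sq_four {p : ℕ} [Fact p.Prime] (t : ZMod p) : t ^ 2 - 4 = 0 ↔ t = 2 ∨ t = -2 := by
  have : t ^ 2 - 4 = (t - 2) * (t + 2) := by ring
  rw [this, mul_eq_zero, sub_eq_zero, add_eq_zero_iff_eq_neg]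

lemma nonsplitTr_card {p : ℕ} [Fact p.Prime] (hp : 3 ≤ p) :
    (splitTr p).ncard + (nonsplitTr p).ncard + 2 = p := by
  have hU : (splitTr p ∪ nonsplitTr p) ∪ {2, -2} = Set.univ := by
    ext t
    simp only [Set.mem_union, splitTr_iff hp, nonsplitTr, Set.mem_ofPred_eq, Set.mem_insert_iff,
      Set.mem_singleton_iff, Set.mem_univ, iff_true, ← sq_four]
    tauto
  have h1 := congrArg Set.ncard hU
  rw [Set.ncard_union_eq _ (Set.toFinite _) (Set.toFinite _),
    Set.ncard_union_eq _ (Set.toFinite _) (Set.toFinite _), Set.ncard_pair (two_ne_neg_two hp),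
    Set.ncard_univ, Nat.card_zmod] at h1
  · exact h1
  · rw [Set.disjoint_left]
    intro t ht
    rw [splitTr_iff hp] at ht
    simpa [nonsplitTr] using ht.2
  · rw [Set.disjoint_left]
    intro t ht h
    have h : t ^ 2 - 4 = 0 := (sq_four t).2 h
    rcases ht with ht | ht
    · exact ((splitTr_iff hp t).1 ht).1 h
    · exact ht ⟨0, by rw [h]; simp⟩

lemma mk_Nf_inj {p : ℕ} {t u : ZMod p} {d e : (ZMod p)ˣ}
    (h : ConjClasses.mk (Nf t d) = ConjClasses.mk (Nf u e)) : t = u := by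
  have := trace_of_isConj (ConjClasses.mk_eq_mk_iff_isConj.1 h)
  rwa [Nf_trace, Nf_trace] at this

lemma one_conj {p : ℕ} {A : SLp p} (h : IsConj A 1) : A = 1 := isConj_one_right.1 h.symm

lemma neg_one_conj {p : ℕ} {A : SLp p} (h : IsConj A (-1)) : A = -1 := by
  obtain ⟨c, hc⟩ := isConj_iff.1 h.symm
  rw [← hc]
  simp

lemma mk_Nf_ne_one {p : ℕ} [Fact p.Prime] {t : ZMod p} {d : (ZMod p)ˣ} :
    ConjClasses.mk (Nf t d) ≠ ConjClasses.mk 1 := fun h =>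
  (Nf_ne t d).1 (one_conj (ConjClasses.mk_eq_mk_iff_isConj.1 h))

lemma mk_Nf_ne_neg_one {p : ℕ} [Fact p.Prime] {t : ZMod p} {d : (ZMod p)ˣ} :
    ConjClasses.mk (Nf t d) ≠ ConjClasses.mk (-1) := fun h =>
  (Nf_ne t d).2 (neg_one_conj (ConjClasses.mk_eq_mk_iff_isConj.1 h))

lemma mk_one_ne {p : ℕ} [Fact p.Prime] (hp : 3 ≤ p) :
    ConjClasses.mk (1 : SLp p) ≠ ConjClasses.mk (-1) := by
  intro h
  have := neg_one_conj (ConjClasses.mk_eq_mk_iff_isConj.1 h)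
  have := congrFun (congrFun (congrArg Subtype.val this) 0) 0
  simp at this
  exact one_ne_neg_one' hp this

lemma set_eq {p : ℕ} (P : SLp p → Prop) (hP : ∀ A B, IsConj A B → P A → P B)
    (S : Set (ConjClasses (SLp p))) (h : ∀ A, P A ↔ ConjClasses.mk A ∈ S) :
    Nat.card {c : ConjClasses (SLp p) // ∀ A ∈ c.carrier, P A} = S.ncard := by
  rw [← Nat.card_coe_set_eq]
  congr 1
  congr 1
  ext c
  induction c using Quotient.inductionOn with
  | _ A =>
    change (∀ B ∈ (ConjClasses.mk A).carrier, P B) ↔ ConjClasses.mk A ∈ S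
    rw [← h]
    constructor
    · intro hA
      exact hA A ConjClasses.mem_carrier_mk
    · intro hA B hB
      rw [ConjClasses.mem_carrier_iff_mk_eq, ConjClasses.mk_eq_mk_iff_isConj] at hB
      exact hP A B hB.symm hA

lemma mk_cases {p : ℕ} [Fact p.Prime] (hp : 3 ≤ p) {s : (ZMod p)ˣ}
    (hs : ∀ d : (ZMod p)ˣ, IsSquare (d : ZMod p) ∨ IsSquare ((d : ZMod p) * s)) (A : SLp p) :
    A = 1 ∨ A = -1 ∨ ConjClasses.mk A = ConjClasses.mk (Nf A.1.trace 1) ∨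
      ((A.1.trace = 2 ∨ A.1.trace = -2) ∧ ConjClasses.mk A = ConjClasses.mk (Nf A.1.trace s)) := by
  by_cases h1 : A = 1
  · exact Or.inl h1
  by_cases h2 : A = -1
  · exact Or.inr (Or.inl h2)
  obtain ⟨d, hd⟩ := conj_Nf A h1 h2
  right; right
  simp only [ConjClasses.mk_eq_mk_iff_isConj]
  by_cases h : A.1.trace ^ 2 - 4 = 0
  · rw [sq_four] at h
    rcases Nf_cases hs A.1.trace d with h3 | h3
    · exact Or.inl (hd.trans h3)
    · exact Or.inr ⟨h, hd.trans h3⟩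
  · exact Or.inl (hd.trans (Nf_conj_one hp _ h d))

lemma mk_Nf_s_ne {p : ℕ} {s : (ZMod p)ˣ} (hs : ¬ IsSquare (s : ZMod p)) (t u : ZMod p)
    (ht : t = 2 ∨ t = -2) : ConjClasses.mk (Nf u 1) ≠ ConjClasses.mk (Nf t s) := by
  intro h
  have := mk_Nf_inj h
  subst this
  rw [ConjClasses.mk_eq_mk_iff_isConj] at h
  rcases ht with rfl | rfl
  · exact Nf_not_conj hs 1 (by ring) (by simpa using h)
  · exact Nf_not_conj hs (-1) (by ring) (by simpa using h)

lemma part_total {p : ℕ} [Fact p.Prime] (hp : 3 ≤ p) :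
    Nat.card (ConjClasses (SLp p)) = p + 4 := by
  obtain ⟨s, hs1, hs⟩ := exists_nonsq hp
  have hU : Set.range (fun t : ZMod p => ConjClasses.mk (Nf t 1)) ∪
      ({ConjClasses.mk 1, ConjClasses.mk (-1)} ∪
      (fun t : ZMod p => ConjClasses.mk (Nf t s)) '' {2, -2}) = Set.univ := by
    rw [Set.eq_univ_iff_forall]
    intro c
    induction c using Quotient.inductionOn with
    | _ A =>
      change ConjClasses.mk A ∈ _
      rcases mk_cases hp hs A with rfl | rfl | h | ⟨h1, h⟩
      · right; left; simp
      · right; left; simp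
      · left; exact ⟨_, h.symm⟩
      · right; right; exact ⟨_, h1, h.symm⟩
  rw [← Set.ncard_univ, ← hU]
  rw [Set.ncard_union_eq _ (Set.toFinite _) (Set.toFinite _),
    Set.ncard_union_eq _ (Set.toFinite _) (Set.toFinite _), Set.ncard_pair (mk_one_ne hp),
    Set.ncard_image_of_injective _ (fun _ _ h => mk_Nf_inj h), Set.ncard_pair (two_ne_neg_two hp),
    ← Set.image_univ, Set.ncard_image_of_injective _ (fun _ _ h => mk_Nf_inj h),
    Set.ncard_univ, Nat.card_zmod]
  · rw [Set.disjoint_left]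
    rintro _ h ⟨t, -, rfl⟩
    rcases h with h | h
    · exact mk_Nf_ne_one h
    · exact mk_Nf_ne_neg_one h
  · rw [Set.disjoint_left]
    rintro _ ⟨u, rfl⟩ ((h | h) | ⟨t, ht, h⟩)
    · exact mk_Nf_ne_one h
    · exact mk_Nf_ne_neg_one h
    · exact mk_Nf_s_ne hs1 t u ht h.symm

lemma part_split {p : ℕ} [Fact p.Prime] (hp : 3 ≤ p) :
    Nat.card {c : ConjClasses (SLp p) // ∀ A ∈ c.carrier, IsSplitSemisimple p A} = (p - 3) / 2 := by
  have hinv : ∀ A B : SLp p, IsConj A B → IsSplitSemisimple p A → IsSplitSemisimple p B := by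
    rintro A B h ⟨C, μ, h1, h2⟩
    exact ⟨C, μ, h.symm.trans h1, h2⟩
  rw [set_eq _ hinv ((fun t : ZMod p => ConjClasses.mk (Nf t 1)) '' splitTr p),
    Set.ncard_image_of_injective _ (fun _ _ h => mk_Nf_inj h)]
  · have := splitTr_card hp
    omega
  · intro A
    constructor
    · intro h
      obtain ⟨μ, h1, h2⟩ := split_conj hp A h
      exact ⟨_, ⟨μ, h1, rfl⟩, (ConjClasses.mk_eq_mk_iff_isConj.2 h2).symm⟩
    · rintro ⟨t, ⟨μ, h1, rfl⟩, h⟩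
      exact hinv _ _ (ConjClasses.mk_eq_mk_iff_isConj.1 h) (Nf_split hp μ h1)

lemma part_nonsplit {p : ℕ} [Fact p.Prime] (hp : 3 ≤ p) :
    Nat.card {c : ConjClasses (SLp p) // ∀ A ∈ c.carrier, IsNonsplitSemisimple p A}
      = (p - 1) / 2 := by
  have hinv : ∀ A B : SLp p, IsConj A B → IsNonsplitSemisimple p A →
      IsNonsplitSemisimple p B := by
    intro A B h hA
    unfold IsNonsplitSemisimple at *
    rwa [← trace_of_isConj h]
  rw [set_eq _ hinv ((fun t : ZMod p => ConjClasses.mk (Nf t 1)) '' nonsplitTr p),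
    Set.ncard_image_of_injective _ (fun _ _ h => mk_Nf_inj h)]
  · have := splitTr_card hp
    have := nonsplitTr_card hp
    omega
  · intro A
    constructor
    · intro h
      have h0 : A.1.trace ^ 2 - 4 ≠ 0 := fun h0 => h ⟨0, by rw [h0]; simp⟩
      obtain ⟨d, hd⟩ := conj_Nf A (by
        rintro rfl
        apply h0; simp; norm_num) (by
        rintro rfl
        apply h0; simp [Matrix.trace_fin_two]; norm_num)
      exact ⟨_, h, (ConjClasses.mk_eq_mk_iff_isConj.2 (hd.trans (Nf_conj_one hp _ h0 d))).symm⟩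
    · rintro ⟨t, ht, h⟩
      refine hinv _ _ (ConjClasses.mk_eq_mk_iff_isConj.1 h) ?_
      unfold IsNonsplitSemisimple
      rwa [Nf_trace]

lemma part_central {p : ℕ} [Fact p.Prime] (hp : 3 ≤ p) :
    Nat.card {c : ConjClasses (SLp p) // ∀ A ∈ c.carrier, IsCentralSL2 p A} = 2 := by
  have hinv : ∀ A B : SLp p, IsConj A B → IsCentralSL2 p A → IsCentralSL2 p B := by
    rintro A B h (rfl | rfl)
    · exact Or.inl (one_conj h.symm)
    · exact Or.inr (neg_one_conj h.symm)
  rw [set_eq _ hinv {ConjClasses.mk 1, ConjClasses.mk (-1)}, Set.ncard_pair (mk_one_ne hp)]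
  intro A
  constructor
  · rintro (rfl | rfl) <;> simp
  · rintro (h | h)
    · exact Or.inl (one_conj (ConjClasses.mk_eq_mk_iff_isConj.1 h))
    · exact Or.inr (neg_one_conj (ConjClasses.mk_eq_mk_iff_isConj.1 h))

lemma part_nonss {p : ℕ} [Fact p.Prime] (hp : 3 ≤ p) :
    Nat.card {c : ConjClasses (SLp p) // ∀ A ∈ c.carrier, IsNonSemisimple p A} = 4 := by
  obtain ⟨s, hs1, hs⟩ := exists_nonsq hp
  have hinv : ∀ A B : SLp p, IsConj A B → IsNonSemisimple p A → IsNonSemisimple p B := by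
    rintro A B h ⟨C, ε, α, h1, h2⟩
    exact ⟨C, ε, α, h.symm.trans h1, h2⟩
  rw [set_eq _ hinv ((fun t : ZMod p => ConjClasses.mk (Nf t 1)) '' {2, -2} ∪
      (fun t : ZMod p => ConjClasses.mk (Nf t s)) '' {2, -2}),
    Set.ncard_union_eq _ (Set.toFinite _) (Set.toFinite _),
    Set.ncard_image_of_injective _ (fun _ _ h => mk_Nf_inj h),
    Set.ncard_image_of_injective _ (fun _ _ h => mk_Nf_inj h), Set.ncard_pair (two_ne_neg_two hp)]
  · rw [Set.disjoint_left]
    rintro _ ⟨u, -, rfl⟩ ⟨t, ht, h⟩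
    exact mk_Nf_s_ne hs1 t u ht h.symm
  · intro A
    constructor
    · intro h
      obtain ⟨ε, d, hε, hd⟩ := nonss_conj A h
      have h2 : 2 * ε ∈ ({2, -2} : Set (ZMod p)) := by
        rcases hε with rfl | rfl <;> simp
      rcases Nf_cases hs (2 * ε) d with h3 | h3
      · exact Or.inl ⟨_, h2, (ConjClasses.mk_eq_mk_iff_isConj.2 (hd.trans h3)).symm⟩
      · exact Or.inr ⟨_, h2, (ConjClasses.mk_eq_mk_iff_isConj.2 (hd.trans h3)).symm⟩
    · have key : ∀ t ∈ ({2, -2} : Set (ZMod p)), ∀ d, IsNonSemisimple p (Nf t d) := by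
        rintro t (rfl | rfl) d
        · simpa using Nf_nonss 1 (Or.inl rfl) d
        · simpa using Nf_nonss (-1) (Or.inr rfl) d
      rintro (⟨t, ht, h⟩ | ⟨t, ht, h⟩)
      · exact hinv _ _ (ConjClasses.mk_eq_mk_iff_isConj.1 h) (key t ht _)
      · exact hinv _ _ (ConjClasses.mk_eq_mk_iff_isConj.1 h) (key t ht _)

theorem sl2_conj_class_count
    (p : ℕ) [Fact p.Prime] (hp : 3 ≤ p) :
    Nat.card (ConjClasses (Matrix.SpecialLinearGroup (Fin 2) (ZMod p))) = p + 4 ∧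
    Nat.card {c : ConjClasses (Matrix.SpecialLinearGroup (Fin 2) (ZMod p)) //
        ∀ A ∈ c.carrier, IsSplitSemisimple p A} = (p - 3) / 2 ∧
    Nat.card {c : ConjClasses (Matrix.SpecialLinearGroup (Fin 2) (ZMod p)) //
        ∀ A ∈ c.carrier, IsNonsplitSemisimple p A} = (p - 1) / 2 ∧
    Nat.card {c : ConjClasses (Matrix.SpecialLinearGroup (Fin 2) (ZMod p)) //
        ∀ A ∈ c.carrier, IsCentralSL2 p A} = 2 ∧
    Nat.card {c : ConjClasses (Matrix.SpecialLinearGroup (Fin 2) (ZMod p)) //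
        ∀ A ∈ c.carrier, IsNonSemisimple p A} = 4 := by
  exact ⟨part_total hp, part_split hp, part_nonsplit hp, part_central hp, part_nonss hp⟩
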